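/- Let G be a finite group, G₀ ⊆ G a subgroup, and (π, U) the covariant representation of (A, G, α) induced from a covariant representation (π₀, V) of (A, G₀, α|_{G₀}) on H₀. Suppose: (a) G₀ = {g ∈ G : π₀ ∘ α_g is quasi-equivalent to π₀}, and (b) π₀ is a factor representation. Then every operator T in the commutant of π(A) commutes with each of the projections p_0,...,p_r onto the subspaces U_{g_j}H₀, where g_0 = 1, g_1,...,g_r are representatives of the left G₀-cosets in G. -/

import Mathlib

variable {A : Type*} [NormedRing A] [StarRing A] [CStarRing A] [NormedAlgebra ℂ A]
  [CompleteSpace A] [StarModule ℂ A]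

/-- The von Neumann algebra (double commutant) generated by a representation
`π : A → B(H)`. -/
noncomputable def genVN {H : Type*} [NormedAddCommGroup H] [InnerProductSpace ℂ H]
    [CompleteSpace H] (π : A →⋆ₐ[ℂ] (H →L[ℂ] H)) : StarSubalgebra ℂ (H →L[ℂ] H) :=
  StarSubalgebra.centralizer ℂ
    (↑(StarSubalgebra.centralizer ℂ (Set.range (⇑π))) : Set (H →L[ℂ] H))

lemma mem_genVN {H : Type*} [NormedAddCommGroup H] [InnerProductSpace ℂ H]
    [CompleteSpace H] (π : A →⋆ₐ[ℂ] (H →L[ℂ] H)) (a : A) : π a ∈ genVN π := by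
  rw [genVN, StarSubalgebra.mem_centralizer_iff]
  intro g hg
  have hg' : star g ∈ StarSubalgebra.centralizer ℂ (Set.range (⇑π)) := star_mem hg
  refine ⟨(((StarSubalgebra.mem_centralizer_iff ℂ).mp hg) (π a) ⟨a, rfl⟩).1.symm, ?_⟩
  exact (((StarSubalgebra.mem_centralizer_iff ℂ).mp hg') (π a) ⟨a, rfl⟩).1.symm

/-- Quasi-equivalence of two representations of a C*-algebra: a *-isomorphism of the
generated von Neumann algebras carrying one representation to the other. -/
def QuasiEquiv {H₁ H₂ : Type*} [NormedAddCommGroup H₁] [InnerProductSpace ℂ H₁]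
    [CompleteSpace H₁] [NormedAddCommGroup H₂] [InnerProductSpace ℂ H₂] [CompleteSpace H₂]
    (π₁ : A →⋆ₐ[ℂ] (H₁ →L[ℂ] H₁)) (π₂ : A →⋆ₐ[ℂ] (H₂ →L[ℂ] H₂)) : Prop :=
  ∃ Φ : genVN π₁ ≃⋆ₐ[ℂ] genVN π₂,
    ∀ a : A, (Φ ⟨π₁ a, mem_genVN π₁ a⟩ : H₂ →L[ℂ] H₂) = π₂ a

section Helpers
open ContinuousLinearMap

/-- Membership in the double commutant, spelled out. -/
lemma mem_genVN_iff_comm {H : Type*} [NormedAddCommGroup H] [InnerProductSpace ℂ H]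
    [CompleteSpace H] (π : A →⋆ₐ[ℂ] (H →L[ℂ] H)) (x : H →L[ℂ] H) :
    x ∈ genVN π ↔ ∀ t : H →L[ℂ] H, (∀ a, t * π a = π a * t) → t * x = x * t := by
  have key : ∀ t : H →L[ℂ] H, t ∈ StarSubalgebra.centralizer ℂ (Set.range (⇑π)) ↔
      ∀ a, t * π a = π a * t := by
    intro t
    rw [StarSubalgebra.mem_centralizer_iff]
    constructor
    · intro h a
      exact (h (π a) ⟨a, rfl⟩).1.symm
    · rintro h _ ⟨a, rfl⟩
      refine ⟨(h a).symm, ?_⟩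
      rw [← map_star]
      exact (h (star a)).symm
  rw [genVN, StarSubalgebra.mem_centralizer_iff]
  constructor
  · intro h t ht
    exact (h t ((key t).2 ht)).1
  · intro h t ht
    exact ⟨h t ((key t).1 ht), h (star t) ((key _).1 (star_mem ht))⟩

variable {H₁ H₂ : Type*} [NormedAddCommGroup H₁] [InnerProductSpace ℂ H₁]
    [CompleteSpace H₁] [NormedAddCommGroup H₂] [InnerProductSpace ℂ H₂] [CompleteSpace H₂]

lemma adjoint_rep_star (π₁ : A →⋆ₐ[ℂ] (H₁ →L[ℂ] H₁)) (a : A) :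
    adjoint (π₁ (star a)) = π₁ a := by
  have h : π₁ (star a) = adjoint (π₁ a) := map_star π₁ a
  rw [h, adjoint_adjoint]

/-- `S` intertwines `π₁` and `π₂`. -/
def Intw (π₁ : A →⋆ₐ[ℂ] (H₁ →L[ℂ] H₁)) (π₂ : A →⋆ₐ[ℂ] (H₂ →L[ℂ] H₂))
    (S : H₁ →L[ℂ] H₂) : Prop := ∀ a, S ∘L π₁ a = π₂ a ∘L S

lemma Intw.adj {π₁ : A →⋆ₐ[ℂ] (H₁ →L[ℂ] H₁)} {π₂ : A →⋆ₐ[ℂ] (H₂ →L[ℂ] H₂)}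
    {S : H₁ →L[ℂ] H₂} (h : Intw π₁ π₂ S) : Intw π₂ π₁ (adjoint S) := by
  intro a
  have := congrArg adjoint (h (star a))
  rw [adjoint_comp, adjoint_comp, adjoint_rep_star, adjoint_rep_star] at this
  exact this.symm

/-- Factor condition. -/
def FactorRep (π : A →⋆ₐ[ℂ] (H₁ →L[ℂ] H₁)) : Prop := ∀ T : H₁ →L[ℂ] H₁,
  T ∈ Set.centralizer (Set.range (⇑π)) →
  T ∈ Set.centralizer (Set.centralizer (Set.range (⇑π))) →
  ∃ c : ℂ, T = c • (1 : H₁ →L[ℂ] H₁)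

lemma proj_comm (K : Submodule ℂ H₁) [K.HasOrthogonalProjection] (t : H₁ →L[ℂ] H₁)
    (h1 : ∀ v ∈ K, t v ∈ K) (h2 : ∀ v ∈ K, (adjoint t) v ∈ K) :
    t * K.starProjection = K.starProjection * t := by
  ext v
  simp only [mul_apply_eq_comp]
  have hd : t v = t (K.starProjection v) + t (v - K.starProjection v) := by
    rw [← map_add]; congr 1; abel
  have ha : K.starProjection (t (K.starProjection v)) = t (K.starProjection v) :=
    Submodule.starProjection_eq_self_iff.2 (h1 _ (Submodule.starProjection_apply_mem K v))
  have hb : K.starProjection (t (v - K.starProjection v)) = 0 := by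
    rw [Submodule.starProjection_apply_eq_zero_iff, Submodule.mem_orthogonal]
    intro u hu
    rw [← adjoint_inner_left]
    exact (Submodule.mem_orthogonal K _).1 (Submodule.sub_starProjection_mem_orthogonal v) _ (h2 u hu)
  rw [hd, map_add, ha, hb, add_zero]

lemma intw_dense {π₁ : A →⋆ₐ[ℂ] (H₁ →L[ℂ] H₁)} {π₂ : A →⋆ₐ[ℂ] (H₂ →L[ℂ] H₂)}
    (hf : FactorRep π₂) {S : H₁ →L[ℂ] H₂} (hS : Intw π₁ π₂ S) (hS0 : S ≠ 0) (η : H₂)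
    (hη : ∀ T, Intw π₁ π₂ T → adjoint T η = 0) : η = 0 := by
  let K : Submodule ℂ H₂ := ⨅ T : {T // Intw π₁ π₂ T}, LinearMap.ker (adjoint T.1).toLinearMap
  have memK : ∀ v, v ∈ K ↔ ∀ T, Intw π₁ π₂ T → adjoint T v = 0 := by
    intro v
    simp [K, Submodule.mem_iInf]
  have hKc : IsClosed (K : Set H₂) := by
    simp only [K, Submodule.coe_iInf]
    exact isClosed_iInter fun T => (adjoint T.1).isClosed_ker
  haveI : CompleteSpace K := hKc.completeSpace_coe
  have hA : ∀ a, ∀ v ∈ K, π₂ a v ∈ K := by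
    intro a v hv
    rw [memK] at hv ⊢
    intro T hT
    have := congrArg (fun f => f v) (hT.adj a)
    simp only [comp_apply, hv T hT, map_zero] at this
    exact this
  have hC : ∀ t ∈ Set.centralizer (Set.range (⇑π₂)), ∀ v ∈ K, adjoint t v ∈ K := by
    intro t ht v hv
    rw [memK] at hv ⊢
    intro T hT
    have h1 : Intw π₁ π₂ (t ∘L T) := by
      intro a
      have h2 : π₂ a ∘L t = t ∘L π₂ a := ht _ ⟨a, rfl⟩
      rw [comp_assoc, hT a, ← comp_assoc, ← comp_assoc, h2]
    have := hv _ h1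
    rwa [adjoint_comp] at this
  have hCs : ∀ t ∈ Set.centralizer (Set.range (⇑π₂)),
      adjoint t ∈ Set.centralizer (Set.range (⇑π₂)) := by
    rintro t ht _ ⟨a, rfl⟩
    have := congrArg star (ht (π₂ (star a)) ⟨_, rfl⟩)
    rw [star_mul, star_mul, ← map_star, star_star, star_eq_adjoint] at this
    exact this.symm
  obtain ⟨c, hc⟩ := hf K.starProjection (by
      rintro _ ⟨a, rfl⟩
      apply proj_comm K _ (hA a)
      rw [← star_eq_adjoint, ← map_star]
      exact hA _) (by
      intro t ht
      apply proj_comm K _ _ (hC t ht)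
      have := hC _ (hCs t ht)
      rwa [adjoint_adjoint] at this)
  have hc0 : c = 0 := by
    obtain ⟨ξ, hξ⟩ : ∃ ξ, S ξ ≠ 0 := by
      by_contra! h
      exact hS0 (by ext v; simpa using h v)
    have : K.starProjection (S ξ) = 0 := by
      rw [Submodule.starProjection_apply_eq_zero_iff, Submodule.mem_orthogonal]
      intro u hu
      rw [← adjoint_inner_left, (memK u).1 hu S hS, inner_zero_left]
    rw [hc] at this
    simpa [hξ] using this
  have : K.starProjection η = η := Submodule.starProjection_eq_self_iff.2 ((memK η).2 hη)
  rw [hc, hc0] at this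
  simpa using this.symm

/-- Auxiliary map `∑ S ⊗ ξ ↦ ∑ S x ξ`. -/
noncomputable def auxL (π₁ : A →⋆ₐ[ℂ] (H₁ →L[ℂ] H₁)) (π₂ : A →⋆ₐ[ℂ] (H₂ →L[ℂ] H₂))
    (x : H₁ →L[ℂ] H₁) : ({S // Intw π₁ π₂ S} →₀ H₁) →ₗ[ℂ] H₂ :=
  Finsupp.lsum ℂ (fun S => (S.1 ∘L x).toLinearMap)

lemma auxL_apply (π₁ : A →⋆ₐ[ℂ] (H₁ →L[ℂ] H₁)) (π₂ : A →⋆ₐ[ℂ] (H₂ →L[ℂ] H₂))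
    (x : H₁ →L[ℂ] H₁) (f) : auxL π₁ π₂ x f = f.sum fun S ξ => S.1 (x ξ) := rfl

lemma star_mem_genVN {π₁ : A →⋆ₐ[ℂ] (H₁ →L[ℂ] H₁)} {x : H₁ →L[ℂ] H₁} (hx : x ∈ genVN π₁) :
    adjoint x ∈ genVN π₁ := by
  rw [← star_eq_adjoint]; exact star_mem hx

lemma adj_comp_comm {π₁ : A →⋆ₐ[ℂ] (H₁ →L[ℂ] H₁)} {π₂ : A →⋆ₐ[ℂ] (H₂ →L[ℂ] H₂)}
    {x : H₁ →L[ℂ] H₁} (hx : x ∈ genVN π₁) {S T : H₁ →L[ℂ] H₂}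
    (hS : Intw π₁ π₂ S) (hT : Intw π₁ π₂ T) :
    (adjoint S ∘L T) ∘L x = x ∘L (adjoint S ∘L T) := by
  refine (mem_genVN_iff_comm π₁ x).1 hx (adjoint S ∘L T) fun a => ?_
  change (adjoint S ∘L T) ∘L π₁ a = π₁ a ∘L (adjoint S ∘L T)
  rw [comp_assoc, hT a, ← comp_assoc, hS.adj a, comp_assoc]

lemma auxL_inner {π₁ : A →⋆ₐ[ℂ] (H₁ →L[ℂ] H₁)} {π₂ : A →⋆ₐ[ℂ] (H₂ →L[ℂ] H₂)}
    {x : H₁ →L[ℂ] H₁} (hx : x ∈ genVN π₁) (y : H₁ →L[ℂ] H₁) (f) :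
    inner ℂ (auxL π₁ π₂ x f) (auxL π₁ π₂ y f) =
      inner ℂ (auxL π₁ π₂ 1 f) (auxL π₁ π₂ (star x * y) f) := by
  simp only [auxL_apply, Finsupp.sum, sum_inner, inner_sum]
  refine Finset.sum_congr rfl fun S _ => Finset.sum_congr rfl fun T _ => ?_
  have h := adj_comp_comm (star_mem_genVN hx) T.2 S.2
  have h := congrArg (fun u => u (y (f S))) h
  simp only [comp_apply] at h
  rw [← adjoint_inner_right, ← adjoint_inner_right, ← h, adjoint_inner_right]
  rfl

lemma auxL_bound {π₁ : A →⋆ₐ[ℂ] (H₁ →L[ℂ] H₁)} {π₂ : A →⋆ₐ[ℂ] (H₂ →L[ℂ] H₂)}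
    {x : H₁ →L[ℂ] H₁} (hx : x ∈ genVN π₁) (f) :
    ‖auxL π₁ π₂ x f‖ ≤ ‖x‖ * ‖auxL π₁ π₂ 1 f‖ := by
  set b : H₁ →L[ℂ] H₁ := algebraMap ℝ _ (‖x‖ ^ 2) - star x * x with hb
  have hb0 : 0 ≤ b := sub_nonneg.2 CStarAlgebra.star_mul_le_algebraMap_norm_sq
  set c := CFC.sqrt b with hc
  have hcc : c * c = b := CFC.sqrt_mul_sqrt_self b hb0
  have hcs : star c = c := (IsSelfAdjoint.of_nonneg (CFC.sqrt_nonneg b))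
  have hcM : c ∈ genVN π₁ := by
    rw [mem_genVN_iff_comm]
    intro t ht
    have h1 : Commute b t := by
      have h2 := (mem_genVN_iff_comm π₁ x).1 hx t ht
      have h3 := (mem_genVN_iff_comm π₁ (star x)).1 (star_mem hx) t ht
      refine Commute.sub_left (Algebra.commutes _ t) ?_
      exact Commute.mul_left (show star x * t = t * star x from h3.symm) h2.symm
    exact (h1.cfcₙ_nnreal NNReal.sqrt).eq.symm
  have hadd : auxL π₁ π₂ (star c * c) f =
      ((‖x‖ : ℂ) ^ 2) • auxL π₁ π₂ 1 f - auxL π₁ π₂ (star x * x) f := by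
    rw [hcs, hcc, hb]
    simp only [auxL_apply, Finsupp.sum, Finset.smul_sum, ← Finset.sum_sub_distrib]
    refine Finset.sum_congr rfl fun S _ => ?_
    rw [sub_apply, map_sub, Algebra.algebraMap_eq_smul_one]
    congr 1
    rw [← map_smul]
    congr 1
    simp only [smul_apply, one_apply_eq_self]
    rw [← Complex.coe_smul]
    simp
  have h1 := auxL_inner (π₂ := π₂) hcM c f
  have h2 := auxL_inner (π₂ := π₂) hx x f
  rw [hadd, inner_sub_right, inner_smul_right, ← h2] at h1
  simp only [inner_self_eq_norm_sq_to_K] at h1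
  have h3 : ‖auxL π₁ π₂ c f‖ ^ 2 = ‖x‖ ^ 2 * ‖auxL π₁ π₂ 1 f‖ ^ 2 - ‖auxL π₁ π₂ x f‖ ^ 2 := by
    apply Complex.ofReal_injective
    push_cast
    exact h1
  have h4 := sq_nonneg ‖auxL π₁ π₂ c f‖
  apply le_of_sq_le_sq _ (by positivity)
  rw [mul_pow]; linarith

lemma exists_transfer {π₁ : A →⋆ₐ[ℂ] (H₁ →L[ℂ] H₁)} {π₂ : A →⋆ₐ[ℂ] (H₂ →L[ℂ] H₂)}
    (D : ∀ η : H₂, (∀ T, Intw π₁ π₂ T → adjoint T η = 0) → η = 0)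
    {x : H₁ →L[ℂ] H₁} (hx : x ∈ genVN π₁) :
    ∃ y : H₂ →L[ℂ] H₂, ∀ S, Intw π₁ π₂ S → y ∘L S = S ∘L x := by
  have hd : DenseRange (auxL π₁ π₂ 1) := by
    have : (LinearMap.range (auxL π₁ π₂ 1)).topologicalClosure = ⊤ := by
      rw [Submodule.topologicalClosure_eq_top_iff, Submodule.eq_bot_iff]
      intro η hη
      refine D η fun T hT => ?_
      rw [Submodule.mem_orthogonal] at hη
      refine ext_inner_left ℂ fun ξ => ?_
      rw [adjoint_inner_right, inner_zero_right]
      refine hη _ ⟨Finsupp.single ⟨T, hT⟩ ξ, ?_⟩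
      simp [auxL]
    rw [← Submodule.dense_iff_topologicalClosure_eq_top] at this
    exact this
  refine ⟨(auxL π₁ π₂ x).extendOfNorm (auxL π₁ π₂ 1), fun S hS => ?_⟩
  ext ξ
  have := LinearMap.extendOfNorm_eq hd ⟨‖x‖, auxL_bound hx⟩ (Finsupp.single ⟨S, hS⟩ ξ)
  simpa [auxL] using this

lemma eq_of_intw {π₁ : A →⋆ₐ[ℂ] (H₁ →L[ℂ] H₁)} {π₂ : A →⋆ₐ[ℂ] (H₂ →L[ℂ] H₂)}
    (D : ∀ η : H₂, (∀ T, Intw π₁ π₂ T → adjoint T η = 0) → η = 0)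
    {y z : H₂ →L[ℂ] H₂} (h : ∀ S, Intw π₁ π₂ S → y ∘L S = z ∘L S) : y = z := by
  apply adjoint.injective
  ext η
  rw [← sub_eq_zero]
  refine D _ fun T hT => ?_
  have := congrArg (fun u => adjoint u η) (h T hT)
  simp only [adjoint_comp, comp_apply] at this
  rw [map_sub, this, sub_self]

lemma transfer_mem {π₁ : A →⋆ₐ[ℂ] (H₁ →L[ℂ] H₁)} {π₂ : A →⋆ₐ[ℂ] (H₂ →L[ℂ] H₂)}
    (D : ∀ η : H₂, (∀ T, Intw π₁ π₂ T → adjoint T η = 0) → η = 0)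
    {x : H₁ →L[ℂ] H₁} {y : H₂ →L[ℂ] H₂}
    (h : ∀ S, Intw π₁ π₂ S → y ∘L S = S ∘L x) : y ∈ genVN π₂ := by
  rw [mem_genVN_iff_comm]
  intro t ht
  refine eq_of_intw D fun S hS => ?_
  have h1 : Intw π₁ π₂ (t ∘L S) := by
    intro a
    have h2 : t ∘L π₂ a = π₂ a ∘L t := ht a
    rw [comp_assoc, hS a, ← comp_assoc, ← comp_assoc, h2]
  change (t ∘L y) ∘L S = (y ∘L t) ∘L S
  rw [comp_assoc, comp_assoc, h S hS, h _ h1, comp_assoc]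

theorem quasiEquiv_of_intw {π₁ : A →⋆ₐ[ℂ] (H₁ →L[ℂ] H₁)} {π₂ : A →⋆ₐ[ℂ] (H₂ →L[ℂ] H₂)}
    (hf₁ : FactorRep π₁) (hf₂ : FactorRep π₂) {S : H₁ →L[ℂ] H₂} (hS : Intw π₁ π₂ S)
    (hS0 : S ≠ 0) : QuasiEquiv π₁ π₂ := by
  have D₂ : ∀ η : H₂, (∀ T, Intw π₁ π₂ T → adjoint T η = 0) → η = 0 :=
    fun η hη => intw_dense hf₂ hS hS0 η hη
  have D₁ : ∀ ξ : H₁, (∀ T, Intw π₂ π₁ T → adjoint T ξ = 0) → ξ = 0 :=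
    fun η hη => intw_dense hf₁ hS.adj (by simpa using hS0) η hη
  choose F hF using fun x : genVN π₁ => exists_transfer D₂ x.2
  have huniq : ∀ (x : genVN π₁) (y : H₂ →L[ℂ] H₂),
      (∀ S, Intw π₁ π₂ S → y ∘L S = S ∘L x.1) → F x = y := fun x y hy =>
    eq_of_intw D₂ fun S hS => (hF x S hS).trans (hy S hS).symm
  let Φ : genVN π₁ →⋆ₐ[ℂ] genVN π₂ :=
    { toFun := fun x => ⟨F x, transfer_mem D₂ (hF x)⟩
      map_one' := Subtype.ext (huniq _ _ fun S _ => by ext; simp)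
      map_zero' := Subtype.ext (huniq _ _ fun S _ => by ext; simp)
      map_mul' := fun x y => Subtype.ext (huniq _ _ fun S hS => by
        change (F x ∘L F y) ∘L S = S ∘L (x.1 ∘L y.1)
        rw [comp_assoc, hF y S hS, ← comp_assoc, hF x S hS, comp_assoc])
      map_add' := fun x y => Subtype.ext (huniq _ _ fun S hS => by
        change (F x + F y) ∘L S = S ∘L (x.1 + y.1)
        rw [add_comp, hF x S hS, hF y S hS, comp_add])
      commutes' := fun c => Subtype.ext (huniq _ _ fun S _ => by
        change (algebraMap ℂ (H₂ →L[ℂ] H₂) c) ∘L S = S ∘L (algebraMap ℂ (H₁ →L[ℂ] H₁) c)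
        ext v
        simp [Algebra.algebraMap_eq_smul_one])
      map_star' := fun x => Subtype.ext (huniq _ _ fun S hS => by
        change adjoint (F x) ∘L S = S ∘L adjoint x.1
        ext v
        rw [← sub_eq_zero]
        refine D₂ _ fun T hT => ?_
        have h1 := congrArg (fun u => adjoint u (S v)) (hF x T hT)
        have h2 := congrArg (fun u => u v) (adj_comp_comm (star_mem_genVN x.2) hT hS)
        simp only [adjoint_comp, comp_apply] at h1 h2
        simp only [comp_apply]
        rw [map_sub, h1, h2, sub_self]) }
  have hbij : Function.Bijective Φ := by
    constructor
    · intro x x' hxx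
      have hFx : F x = F x' := congrArg Subtype.val hxx
      apply Subtype.ext
      apply adjoint.injective
      refine eq_of_intw D₁ fun T hT => ?_
      have h1 := hF x _ hT.adj
      have h2 := hF x' _ hT.adj
      rw [← hFx, h1] at h2
      have := congrArg adjoint h2
      rwa [adjoint_comp, adjoint_comp, adjoint_adjoint] at this
    · intro y
      obtain ⟨x, hx⟩ := exists_transfer D₁ (star_mem_genVN y.2)
      have hxm := star_mem_genVN (transfer_mem D₁ hx)
      refine ⟨⟨adjoint x, hxm⟩, Subtype.ext (huniq _ _ fun S hS => ?_)⟩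
      have := congrArg adjoint (hx _ hS.adj)
      rw [adjoint_comp, adjoint_comp, adjoint_adjoint, adjoint_adjoint] at this
      exact this.symm
  refine ⟨StarAlgEquiv.ofBijective Φ hbij, fun a => ?_⟩
  exact huniq _ _ fun S hS => (hS a).symm

end Helpers

/-- Let `(π, U)` be the covariant representation of `(A, G, α)` induced from
a covariant representation `(π₀, V)` of `(A, G₀, α|_{G₀})` on `H₀` (realized inside `H` via
an isometry `ι`, with `H = ⊕_j U_{g_j} H₀` for coset representatives `g_j`).  If
(a) `G₀ = {g : π₀ ∘ α_g ≈ π₀}` and (b) `π₀` is a factor representation, then every `T` in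
the commutant of `π(A)` commutes with each of the projections `p_j` onto `U_{g_j} H₀`. -/
theorem commutant_of_induced_rep_commutes_with_blocks
    (H₀ H : Type*) [NormedAddCommGroup H₀] [InnerProductSpace ℂ H₀] [CompleteSpace H₀]
    [NormedAddCommGroup H] [InnerProductSpace ℂ H] [CompleteSpace H]
    (G : Type*) [Group G] [Finite G] (G₀ : Subgroup G)
    (α : G → A ≃⋆ₐ[ℂ] A) (hα : ∀ (g h : G) (x : A), α (g * h) x = α g (α h x))
    (π₀ : A →⋆ₐ[ℂ] (H₀ →L[ℂ] H₀)) (V : G₀ →* unitary (H₀ →L[ℂ] H₀))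
    (hcov₀ : ∀ (h : G₀) (x : A),
      π₀ (α (h : G) x) = (V h : H₀ →L[ℂ] H₀) * π₀ x * star (V h : H₀ →L[ℂ] H₀))
    (π : A →⋆ₐ[ℂ] (H →L[ℂ] H)) (U : G →* unitary (H →L[ℂ] H))
    (hcov : ∀ (g : G) (x : A),
      π (α g x) = (U g : H →L[ℂ] H) * π x * star (U g : H →L[ℂ] H))
    -- `ι` realizes `H₀` as a subspace of `H`
    (ι : H₀ →L[ℂ] H) (hι : (ContinuousLinearMap.adjoint ι).comp ι = 1)
    -- `H₀` is invariant under `π(A)` and carries the representation `π₀`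
    (hinv : ∀ a : A, π a * (ι.comp (ContinuousLinearMap.adjoint ι)) =
      (ι.comp (ContinuousLinearMap.adjoint ι)) * π a)
    (hcompr : ∀ a : A, (ContinuousLinearMap.adjoint ι).comp ((π a).comp ι) = π₀ a)
    -- `U` restricted to `G₀` on `H₀` is `V`
    (hres : ∀ h : G₀, ((U (h : G) : H →L[ℂ] H)).comp ι = ι.comp (V h : H₀ →L[ℂ] H₀))
    -- coset representatives `g 0 = 1, g 1, ..., g r` of the left `G₀`-cosets
    (r : ℕ) (g : Fin (r + 1) → G) (hg0 : g 0 = 1)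
    (hg_distinct : ∀ j k : Fin (r + 1), j ≠ k → (g j)⁻¹ * g k ∉ G₀)
    (hg_cover : ∀ γ : G, ∃ j : Fin (r + 1), (g j)⁻¹ * γ ∈ G₀)
    -- the subspaces `U_{g_j} H₀` decompose `H`
    (p : Fin (r + 1) → (H →L[ℂ] H))
    (hp : ∀ j, p j = (U (g j) : H →L[ℂ] H) * (ι.comp (ContinuousLinearMap.adjoint ι)) *
      star (U (g j) : H →L[ℂ] H))
    (hp_sum : ∑ j, p j = 1)
    -- (a) `G₀` is exactly the set of `g` with `π₀ ∘ α_g` quasi-equivalent to `π₀`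
    (hG₀ : ∀ γ : G, γ ∈ G₀ ↔ QuasiEquiv (π₀.comp ((α γ : A ≃⋆ₐ[ℂ] A) : A →⋆ₐ[ℂ] A)) π₀)
    -- (b) `π₀` is a factor representation
    (hfactor : ∀ T : H₀ →L[ℂ] H₀,
      T ∈ Set.centralizer (Set.range (⇑π₀)) →
      T ∈ Set.centralizer (Set.centralizer (Set.range (⇑π₀))) →
      ∃ c : ℂ, T = c • (1 : H₀ →L[ℂ] H₀)) :
    ∀ T : H →L[ℂ] H, T ∈ Set.centralizer (Set.range (⇑π)) →
      ∀ j : Fin (r + 1), T * p j = p j * T := by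
  intro T hT
  have hπι : ∀ a, (π a).comp ι = ι.comp (π₀ a) := by
    intro a
    have h1 : (π a ∘L (ι ∘L ContinuousLinearMap.adjoint ι)) ∘L ι
      = ((ι ∘L ContinuousLinearMap.adjoint ι) ∘L π a) ∘L ι :=
        congrArg (fun u => u ∘L ι) (hinv a)
    have h2 := hcompr a
    ext v
    have h1 := congrArg (fun u => u v) h1
    have h2 := congrArg (fun u => u v) h2
    have h3 := congrArg (fun u => u v) hι
    simp only [ContinuousLinearMap.comp_apply, one_apply_eq_self] at h1 h2 h3 ⊢
    rw [h3, h2] at h1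
    exact h1
  let W : Fin (r + 1) → (H₀ →L[ℂ] H) := fun j => (U (g j) : H →L[ℂ] H) ∘L ι
  have hW : ∀ j a, π (α (g j) a) ∘L W j = W j ∘L π₀ a := by
    intro j a
    have h : π (α (g j) a) * (U (g j) : H →L[ℂ] H) = (U (g j) : H →L[ℂ] H) * π a := by
      rw [hcov, mul_assoc, Unitary.coe_star_mul_self, mul_one]
    change π (α (g j) a) ∘L ((U (g j) : H →L[ℂ] H) ∘L ι) = ((U (g j) : H →L[ℂ] H) ∘L ι) ∘L π₀ a
    rw [ContinuousLinearMap.comp_assoc, ← hπι, ← ContinuousLinearMap.comp_assoc,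
      ← ContinuousLinearMap.comp_assoc]
    exact congrArg (fun u => u ∘L ι) h
  have hpW : ∀ j, p j = W j ∘L ContinuousLinearMap.adjoint (W j) := by
    intro j
    rw [hp]
    simp only [W, ContinuousLinearMap.adjoint_comp]
    rfl
  have hoff : ∀ j k, j ≠ k → p j * T * p k = 0 := by
    intro j k hjk
    have hS : ContinuousLinearMap.adjoint (W j) ∘L T ∘L W k = 0 := by
      by_contra hne
      have hγ := hg_distinct k j hjk.symm
      apply hγ
      rw [hG₀]
      have hrange : Set.range (⇑(π₀.comp ((α ((g k)⁻¹ * g j) : A ≃⋆ₐ[ℂ] A) : A →⋆ₐ[ℂ] A)))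
          = Set.range (⇑π₀) := by
        ext u
        constructor
        · rintro ⟨a, rfl⟩
          exact ⟨_, rfl⟩
        · rintro ⟨a, rfl⟩
          obtain ⟨b, rfl⟩ := (α ((g k)⁻¹ * g j)).surjective a
          exact ⟨b, rfl⟩
      refine quasiEquiv_of_intw ?_ hfactor (S := ContinuousLinearMap.adjoint (W j) ∘L T ∘L W k)
        ?_ hne
      · unfold FactorRep
        rw [hrange]
        exact hfactor
      · intro a
        change (ContinuousLinearMap.adjoint (W j) ∘L T ∘L W k) ∘L π₀ (α ((g k)⁻¹ * g j) a) = _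
        have h1 := hW k (α ((g k)⁻¹ * g j) a)
        rw [← hα, mul_inv_cancel_left] at h1
        have h2 : π (α (g j) a) ∘L T = T ∘L π (α (g j) a) := hT _ ⟨_, rfl⟩
        have h3 := congrArg ContinuousLinearMap.adjoint (hW j (star a))
        rw [ContinuousLinearMap.adjoint_comp _ (W j), ContinuousLinearMap.adjoint_comp (W j), map_star,
          adjoint_rep_star, adjoint_rep_star] at h3
        rw [ContinuousLinearMap.comp_assoc, ContinuousLinearMap.comp_assoc, ← h1,
          ← ContinuousLinearMap.comp_assoc T, ← h2, ContinuousLinearMap.comp_assoc,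
          ← ContinuousLinearMap.comp_assoc, h3, ContinuousLinearMap.comp_assoc]
    rw [hpW, hpW]
    change ((W j ∘L ContinuousLinearMap.adjoint (W j)) ∘L T) ∘L
      (W k ∘L ContinuousLinearMap.adjoint (W k)) = 0
    have : ((W j ∘L ContinuousLinearMap.adjoint (W j)) ∘L T) ∘L
      (W k ∘L ContinuousLinearMap.adjoint (W k)) =
      W j ∘L (ContinuousLinearMap.adjoint (W j) ∘L T ∘L W k) ∘L
        ContinuousLinearMap.adjoint (W k) := rfl
    rw [this, hS]
    simp
  intro j
  have e1 : T * p j = p j * T * p j := by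
    calc T * p j = (∑ k, p k) * T * p j := by rw [hp_sum, one_mul]
      _ = ∑ k, p k * T * p j := by rw [Finset.sum_mul, Finset.sum_mul]
      _ = p j * T * p j := Finset.sum_eq_single j (fun k _ hk => hoff k j hk) (by simp)
  have e2 : p j * T = p j * T * p j := by
    calc p j * T = p j * T * (∑ k, p k) := by rw [hp_sum, mul_one]
      _ = ∑ k, p j * T * p k := by rw [Finset.mul_sum]
      _ = p j * T * p j := Finset.sum_eq_single j (fun k _ hk => hoff j k hk.symm) (by simp)
  rw [e1, ← e2]
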